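/- arXiv:1808.00634 — 3 statements merged into one kernel-verified Lean document; each statement's English description precedes it below -/
import Mathlib

section
/- For every n ≥ 1, if two tuples of real numbers a_1,…,a_n and b_1,…,b_n define the same character of the Houghton group H_n, i.e., a_1·χ_1(η) + ⋯ + a_n·χ_n(η) = b_1·χ_1(η) + ⋯ + b_n·χ_n(η) for all η ∈ H_n, then there is a constant c ∈ ℝ with b_i = a_i + c for every i; consequently the number m(χ) := |{i : a_i < max{a_1,…,a_n}}| depends only on the character χ = a_1·χ_1 + ⋯ + a_n·χ_n and not on the chosen coefficients, i.e., |{i : a_i < max{a_1,…,a_n}}| = |{i : b_i < max{b_1,…,b_n}}|. -/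
/-- A map `f : {1,…,n} × ℕ → {1,…,n} × ℕ` is an *eventual translation* if for each
`i` there exist `m_i ∈ ℤ` and `N_i ∈ ℕ` with `f (i, x) = (i, x + m_i)` for all `x ≥ N_i`. -/
def IsEvTrans {n : ℕ} (f : Fin n × ℕ → Fin n × ℕ) : Prop :=
  ∀ i : Fin n, ∃ m : ℤ, ∃ N : ℕ, ∀ x : ℕ, N ≤ x →
    (f (i, x)).1 = i ∧ ((f (i, x)).2 : ℤ) = (x : ℤ) + m

lemma IsEvTrans.id {n : ℕ} : IsEvTrans (id : Fin n × ℕ → Fin n × ℕ) :=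
  fun i => ⟨0, 0, fun x _ => by simp⟩

lemma IsEvTrans.comp {n : ℕ} {f g : Fin n × ℕ → Fin n × ℕ}
    (hf : IsEvTrans f) (hg : IsEvTrans g) : IsEvTrans (f ∘ g) := by
  intro i
  obtain ⟨m₁, N₁, h₁⟩ := hg i
  obtain ⟨m₂, N₂, h₂⟩ := hf i
  refine ⟨m₁ + m₂, max N₁ ((N₂ : ℤ) - m₁).toNat, fun x hx => ?_⟩
  have hx₁ : N₁ ≤ x := le_trans (le_max_left _ _) hx
  obtain ⟨hg1, hg2⟩ := h₁ x hx₁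
  have hgix : g (i, x) = (i, (g (i, x)).2) := Prod.ext hg1 rfl
  have hxa : ((N₂ : ℤ) - m₁).toNat ≤ x := le_trans (le_max_right _ _) hx
  have hxb : (N₂ : ℤ) - m₁ ≤ ((((N₂ : ℤ) - m₁).toNat : ℤ)) := Int.self_le_toNat _
  have hyN : N₂ ≤ (g (i, x)).2 := by
    have : (N₂ : ℤ) ≤ ((g (i, x)).2 : ℤ) := by omega
    exact_mod_cast this
  obtain ⟨hf1, hf2⟩ := h₂ (g (i, x)).2 hyN
  constructor
  · show (f (g (i, x))).1 = i
    rw [hgix]; exact hf1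
  · show ((f (g (i, x))).2 : ℤ) = (x : ℤ) + (m₁ + m₂)
    rw [hgix, hf2, hg2]; ring

lemma IsEvTrans.inv {n : ℕ} {f : Equiv.Perm (Fin n × ℕ)} (hf : IsEvTrans ⇑f) :
    IsEvTrans ⇑f.symm := by
  intro i
  obtain ⟨m, N, h⟩ := hf i
  refine ⟨-m, ((N : ℤ) + m).toNat, fun y hy => ?_⟩
  have hy' : (N : ℤ) + m ≤ (y : ℤ) :=
    le_trans (Int.self_le_toNat _) (by exact_mod_cast hy)
  set x := ((y : ℤ) - m).toNat with hxdef
  have hx : (x : ℤ) = (y : ℤ) - m := Int.toNat_of_nonneg (by omega)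
  have hxN : N ≤ x := by omega
  obtain ⟨h1, h2⟩ := h x hxN
  have hfx : f (i, x) = (i, y) := by
    have h3 : ((f (i, x)).2 : ℤ) = (y : ℤ) := by rw [h2]; omega
    exact Prod.ext h1 (by exact_mod_cast h3)
  have hsymm : f.symm (i, y) = (i, x) := by rw [← hfx]; exact f.symm_apply_apply _
  rw [hsymm]
  exact ⟨rfl, by omega⟩

/-- The Houghton group `H_n`, as the subgroup of `Equiv.Perm (Fin n × ℕ)` consisting
of the eventual translations. -/
def Houghton (n : ℕ) : Subgroup (Equiv.Perm (Fin n × ℕ)) where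
  carrier := {η | IsEvTrans ⇑η}
  one_mem' := IsEvTrans.id
  mul_mem' := fun ha hb => IsEvTrans.comp ha hb
  inv_mem' := fun ha => IsEvTrans.inv ha

/-- The monoid `M_n` of injective eventual translations, as a submonoid of
`Function.End (Fin n × ℕ)` (whose multiplication is composition). -/
def Mmon (n : ℕ) : Submonoid (Function.End (Fin n × ℕ)) where
  carrier := {f | Function.Injective f ∧ IsEvTrans f}
  one_mem' := ⟨fun _ _ h => h, IsEvTrans.id⟩
  mul_mem' := fun ha hb => ⟨ha.1.comp hb.1, IsEvTrans.comp ha.2 hb.2⟩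

open Classical in
/-- `χ_i(f)` : the unique integer `m` such that `f (i, x) = (i, x + m)` for all
sufficiently large `x` (or junk value `0` if no such integer exists). -/
noncomputable def chiF (n : ℕ) (i : Fin n) (f : Fin n × ℕ → Fin n × ℕ) : ℤ :=
  if h : ∃ m : ℤ, ∃ N : ℕ, ∀ x : ℕ, N ≤ x →
      (f (i, x)).1 = i ∧ ((f (i, x)).2 : ℤ) = (x : ℤ) + m
  then h.choose else 0

/-!
For distinct rays `p` and `q`, the group `H_n` contains a permutation that eventually translates `p`
by `-1` and `q` by `1`, and fixes all other rays. Evaluating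
`a_1 χ_1 + ⋯ + a_n χ_n` on it gives `a_q - a_p`, so a character determines all differences of its
coefficients. Adding a constant is strictly increasing, so it does not change which coefficients
lie below the maximum.
-/

section EventualTranslation

variable {ι : Type*} {f : ι × ℕ → ι × ℕ} {i : ι} {m m' : ℤ}

/-- `f` is eventually the translation by `m` on the ray `{i} × ℕ`. This is the condition appearing,
for `ι = Fin n`, in `IsEvTrans` and `chiF`, to both of which it unfolds definitionally. -/
def EventuallyTranslates (f : ι × ℕ → ι × ℕ) (i : ι) (m : ℤ) : Prop :=
  ∃ N : ℕ, ∀ x : ℕ, N ≤ x → (f (i, x)).1 = i ∧ ((f (i, x)).2 : ℤ) = (x : ℤ) + m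

lemma EventuallyTranslates.unique (h : EventuallyTranslates f i m)
    (h' : EventuallyTranslates f i m') : m = m' := by
  obtain ⟨N, hN⟩ := h
  obtain ⟨N', hN'⟩ := h'
  have hm := (hN (max N N') (le_max_left _ _)).2
  have hm' := (hN' (max N N') (le_max_right _ _)).2
  exact add_left_cancel (hm.symm.trans hm')

lemma EventuallyTranslates.chiF_eq {n : ℕ} {f : Fin n × ℕ → Fin n × ℕ} {i : Fin n}
    (h : EventuallyTranslates f i m) : chiF n i f = m := by
  have hex : ∃ m, EventuallyTranslates f i m := ⟨m, h⟩
  have hchi : chiF n i f = hex.choose := dif_pos hex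
  exact hchi.trans (hex.choose_spec.unique h)

end EventualTranslation

section RayShift

variable {ι : Type*} [DecidableEq ι] {p q : ι}

/-- The map underlying `rayShift`: it moves the ray `p` one step towards its origin, sends the
origin of `p` to that of `q`, and moves the ray `q` one step outwards. It is a bijection only for
`p ≠ q`. -/
def rayShiftFun (p q : ι) (z : ι × ℕ) : ι × ℕ :=
  if z.1 = p then (if z.2 = 0 then (q, 0) else (p, z.2 - 1))
  else if z.1 = q then (q, z.2 + 1) else z

lemma rayShiftFun_leftInverse (hpq : p ≠ q) :
    Function.LeftInverse (rayShiftFun q p) (rayShiftFun p q) := by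
  rintro ⟨i, x⟩
  grind [rayShiftFun]

/-- The permutation of `ι × ℕ` that shifts the bi-infinite line formed by the distinct rays `p` and
`q` one step from `p` to `q`. It supplies the elements of `H_n` on which characters are tested. -/
def rayShift (hpq : p ≠ q) : Equiv.Perm (ι × ℕ) where
  toFun := rayShiftFun p q
  invFun := rayShiftFun q p
  left_inv := rayShiftFun_leftInverse hpq
  right_inv := rayShiftFun_leftInverse hpq.symm

lemma eventuallyTranslates_rayShift (hpq : p ≠ q) (i : ι) :
    EventuallyTranslates (rayShift hpq) i
      ((if i = q then 1 else 0) - (if i = p then 1 else 0)) := by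
  refine ⟨1, fun x hx => ?_⟩
  change (rayShiftFun p q (i, x)).1 = i ∧ ((rayShiftFun p q (i, x)).2 : ℤ) = _
  grind [rayShiftFun]

end RayShift

section Character

variable {n : ℕ} {A : Type*} [AddCommGroup A]

lemma rayShift_mem_houghton {p q : Fin n} (hpq : p ≠ q) : rayShift hpq ∈ Houghton n :=
  fun i => ⟨_, eventuallyTranslates_rayShift hpq i⟩

lemma sum_chiF_rayShift_zsmul {p q : Fin n} (hpq : p ≠ q) (a : Fin n → A) :
    ∑ i, chiF n i (rayShift hpq) • a i = a q - a p := by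
  simp only [(eventuallyTranslates_rayShift hpq _).chiF_eq, sub_smul, ite_smul, one_smul, zero_smul,
    Finset.sum_sub_distrib, Finset.sum_ite_eq', Finset.mem_univ, if_true]

lemma sub_eq_sub_of_sum_chiF_zsmul_eq {a b : Fin n → A}
    (h : ∀ η ∈ Houghton n, ∑ i, chiF n i η • a i = ∑ i, chiF n i η • b i) (p q : Fin n) :
    a q - a p = b q - b p := by
  obtain rfl | hpq := eq_or_ne p q
  · simp only [sub_self]
  · simpa only [sum_chiF_rayShift_zsmul] using h (rayShift hpq) (rayShift_mem_houghton hpq)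

end Character

lemma filter_lt_sup'_comp_of_strictMono {ι α β : Type*} [LinearOrder α] [LinearOrder β] {g : α → β}
    (hg : StrictMono g) {s : Finset ι} (hs : s.Nonempty) (f : ι → α) :
    (s.filter fun i => g (f i) < s.sup' hs fun j => g (f j)) =
      s.filter fun i => f i < s.sup' hs f := by
  simp only [Finset.lt_sup'_iff, hg.lt_iff_lt]

theorem coefficients_differ_by_constant_general {n : ℕ} {A : Type*} [AddCommGroup A]
    [LinearOrder A] [IsOrderedAddMonoid A] (hn : (Finset.univ : Finset (Fin n)).Nonempty)
    {a b : Fin n → A}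
    (h : ∀ η ∈ Houghton n, ∑ i, chiF n i η • a i = ∑ i, chiF n i η • b i) :
    (∃ c : A, ∀ i, b i = a i + c) ∧
    (Finset.univ.filter fun i => a i < Finset.univ.sup' hn a).card =
      (Finset.univ.filter fun i => b i < Finset.univ.sup' hn b).card := by
  have ⟨p, _⟩ := hn
  obtain ⟨c, hc⟩ : ∃ c : A, ∀ i, b i = a i + c := by
    refine ⟨b p - a p, fun i => ?_⟩
    have hdiff : a i - a p = b i - b p := sub_eq_sub_of_sum_chiF_zsmul_eq h p i
    rw [add_sub_left_comm, hdiff, add_sub_cancel]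
  obtain rfl : b = fun i => a i + c := funext hc
  have hmono : StrictMono fun x : A => x + c := add_left_strictMono
  exact ⟨⟨c, hc⟩, congrArg Finset.card (filter_lt_sup'_comp_of_strictMono hmono hn a).symm⟩

/-- If two coefficient tuples define the same character of `H_n` then they differ by a
constant, and consequently the quantity `m(χ) = |{i : a_i < max a}|` is well defined. -/
theorem coefficients_differ_by_constant (n : ℕ) (hn : 1 ≤ n) (a b : Fin n → ℝ)
    (h : ∀ η : Equiv.Perm (Fin n × ℕ), η ∈ Houghton n →
      ∑ i : Fin n, a i * (chiF n i ⇑η : ℝ) = ∑ i : Fin n, b i * (chiF n i ⇑η : ℝ)) :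
    (∃ c : ℝ, ∀ i : Fin n, b i = a i + c) ∧
    (Finset.univ.filter fun i : Fin n =>
        a i < Finset.univ.sup' ⟨⟨0, by omega⟩, Finset.mem_univ _⟩ a).card =
      (Finset.univ.filter fun i : Fin n =>
        b i < Finset.univ.sup' ⟨⟨0, by omega⟩, Finset.mem_univ _⟩ b).card := by
  refine coefficients_differ_by_constant_general _ fun η hη => ?_
  simpa only [zsmul_eq_mul, mul_comm] using h η hη
end

section
/- For every n ≥ 3, the kernel of the homomorphism χ_1 + 2·χ_2 : H_n → ℤ (sending η to χ_1(η) + 2·χ_2(η)) is finitely generated but not finitely presented. -/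
/-- A group is finitely presented if it is the quotient of a finitely generated free
group by the normal closure of finitely many relators. -/
def GroupFP (G : Type*) [Group G] : Prop :=
  ∃ (m : ℕ) (π : FreeGroup (Fin m) →* G), Function.Surjective π ∧
    ∃ S : Finset (FreeGroup (Fin m)), Subgroup.normalClosure (S : Set (FreeGroup (Fin m))) = π.ker

/-!
Let `K` be the kernel of `χ_a + s χ_b`, where `s ≥ 2`.

*Not finitely presented.* Some `t ∈ K` moves along a copy `c : ℤ → {1,…,n} × ℕ` of the integers,
and on all but finitely many points of `c` every element of `K` acts as a translation, which defines
`α : K → ℤ` with `α t = 1`. The kernel of `α` is the increasing union of the subgroups `N k` fixing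
all points of `c` outside the window `[-k, k + 1]`. Let `H k` be the HNN extension of `N k` along
the part of conjugation by `t` that stays inside `N k`. Writing elements of `K` as `n * t ^ a` gives
maps `K → H k` that are multiplicative on any two given elements once `k` is large. If `K` were
finitely presented, finitely many relations would have to hold, so these maps would agree on any
given elements with genuine homomorphisms for large `k`. But the transpositions of
`{c i, c (i + 1)}` for `i = k + 1` and `i = -k` commute in `K`, while by Britton's lemma their
images in `H k` do not.

*Finitely generated.* `K` contains all finitely supported permutations, and modulo these it is a
subgroup of `ℤⁿ`. Given finitely many elements of `K` that together shift each ray nontrivially,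
every point can be moved into a fixed finite set, so these elements and finitely many transpositions
generate all finitely supported permutations.
-/

open Filter Multiplicative

/-! ### HNN extensions along partial conjugation -/

section ConjHNN

theorem not_commute_t_conj_of {G : Type*} [Group G] {A B : Subgroup G} {φ : A ≃* B} {g h : G}
    (hg : g ∉ A) (hh : h ∉ B) :
    ¬ Commute (HNNExtension.t * HNNExtension.of g * HNNExtension.t⁻¹ : HNNExtension G A B φ)
      (HNNExtension.of h) := by
  intro hcomm
  let w : HNNExtension.NormalWord.ReducedWord G A B :=
    { head := 1
      toList := [(1, g), (-1, h), (1, g⁻¹), (-1, 1)]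
      chain := by simp [hg, hh] }
  have hprod : HNNExtension.of h = w.prod φ := by
    calc HNNExtension.of h
        = (HNNExtension.t * HNNExtension.of g * HNNExtension.t⁻¹) * HNNExtension.of h *
            (HNNExtension.t * HNNExtension.of g * HNNExtension.t⁻¹)⁻¹ :=
          eq_mul_inv_of_mul_eq hcomm.eq.symm
      _ = w.prod φ := by simp [w, HNNExtension.NormalWord.ReducedWord.prod, mul_assoc]
  have hnil := HNNExtension.ReducedWord.toList_eq_nil_of_mem_of_range φ w ⟨h, hprod⟩
  exact List.cons_ne_nil _ _ hnil

variable {G : Type*} [Group G]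

/-- The elements of `M` that conjugation by `t` maps into `M`. -/
def conjDomain (M : Subgroup G) (t : G) : Subgroup M :=
  (M.comap (MulAut.conj t).toMonoidHom).subgroupOf M

lemma mem_conjDomain {M : Subgroup G} {t : G} {g : M} :
    g ∈ conjDomain M t ↔ t * g * t⁻¹ ∈ M := by
  simp [conjDomain, Subgroup.mem_subgroupOf]

/-- Conjugation by `t` as an isomorphism between the subgroups of `M` on which it and its inverse
stay inside `M`. -/
def conjDomainEquiv (M : Subgroup G) (t : G) : conjDomain M t ≃* conjDomain M t⁻¹ where
  toFun g := ⟨⟨t * g * t⁻¹, mem_conjDomain.1 g.2⟩, mem_conjDomain.2 (by simp [mul_assoc])⟩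
  invFun g :=
    ⟨⟨t⁻¹ * g * t, by simpa using mem_conjDomain.1 g.2⟩, mem_conjDomain.2 (by simp [mul_assoc])⟩
  left_inv g := by ext; simp [mul_assoc]
  right_inv g := by ext; simp [mul_assoc]
  map_mul' g h := by ext; simp [mul_assoc]

/-- The HNN extension of `M` whose stable letter imitates conjugation by `t` wherever that
conjugation stays inside `M`. -/
abbrev ConjHNN (M : Subgroup G) (t : G) : Type _ :=
  HNNExtension M (conjDomain M t) (conjDomain M t⁻¹) (conjDomainEquiv M t)

namespace ConjHNN

variable {M : Subgroup G} {t g h : G}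

open Classical in
/-- The inclusion of `M` into `ConjHNN M t`, extended by the junk value `1` outside `M`. -/
noncomputable def base (M : Subgroup G) (t g : G) : ConjHNN M t :=
  if hg : g ∈ M then HNNExtension.of ⟨g, hg⟩ else 1

lemma base_of_mem (hg : g ∈ M) : base M t g = HNNExtension.of ⟨g, hg⟩ := dif_pos hg

lemma base_one : base M t 1 = 1 := by
  rw [base_of_mem M.one_mem]
  exact map_one _

lemma base_mul (hg : g ∈ M) (hh : h ∈ M) : base M t (g * h) = base M t g * base M t h := by
  rw [base_of_mem hg, base_of_mem hh, base_of_mem (M.mul_mem hg hh), ← map_mul]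
  rfl

lemma base_conj (hg : g ∈ M) (hg' : t * g * t⁻¹ ∈ M) :
    base M t (t * g * t⁻¹) = HNNExtension.t * base M t g * HNNExtension.t⁻¹ := by
  rw [base_of_mem hg, base_of_mem hg']
  exact HNNExtension.equiv_eq_conj (φ := conjDomainEquiv M t) ⟨⟨g, hg⟩, mem_conjDomain.2 hg'⟩

theorem base_zpow_conj {a : ℤ} (h : ∀ i ∈ Set.uIcc 0 a, t ^ i * g * (t ^ i)⁻¹ ∈ M) :
    base M t (t ^ a * g * (t ^ a)⁻¹) =
      HNNExtension.t ^ a * base M t g * (HNNExtension.t ^ a)⁻¹ := by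
  induction a with
  | zero => simp
  | succ a ih =>
    have conj_succ : t ^ (a + 1 : ℤ) * g * (t ^ (a + 1 : ℤ))⁻¹ =
        t * (t ^ (a : ℤ) * g * (t ^ (a : ℤ))⁻¹) * t⁻¹ := by group
    have ha : t ^ (a : ℤ) * g * (t ^ (a : ℤ))⁻¹ ∈ M := h a (Set.mem_uIcc.2 (by omega))
    have ha' := h (a + 1) Set.right_mem_uIcc
    rw [conj_succ] at ha' ⊢
    rw [base_conj ha ha', ih fun i hi => h i ?_]
    · group
    · rw [Set.mem_uIcc] at hi ⊢
      omega
  | pred a ih =>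
    have conj_pred : t ^ (-a : ℤ) * g * (t ^ (-a : ℤ))⁻¹ =
        t * (t ^ (-a - 1 : ℤ) * g * (t ^ (-a - 1 : ℤ))⁻¹) * t⁻¹ := by group
    have ha := h (-a - 1) Set.right_mem_uIcc
    have ha' : t ^ (-a : ℤ) * g * (t ^ (-a : ℤ))⁻¹ ∈ M := h (-a) (Set.mem_uIcc.2 (by omega))
    have ih := ih fun i hi => h i (by rw [Set.mem_uIcc] at hi ⊢; omega)
    rw [conj_pred] at ha' ih
    rw [base_conj ha ha', mul_inv_eq_iff_eq_mul, ← eq_inv_mul_iff_mul_eq] at ih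
    rw [ih]
    group

theorem not_commute_t_conj_base (hg : g ∈ M) (hh : h ∈ M) (hg' : t * g * t⁻¹ ∉ M)
    (hh' : t⁻¹ * h * t ∉ M) :
    ¬ Commute (HNNExtension.t * base M t g * HNNExtension.t⁻¹) (base M t h) := by
  rw [base_of_mem hg, base_of_mem hh]
  exact not_commute_t_conj_of (mt mem_conjDomain.1 hg') fun hmem =>
    hh' (by simpa using mem_conjDomain.1 hmem)

-- Along the window `[p, q]` the images of the conjugates of `τ` are forced to be the obvious ones;
-- one step further the HNN extension has forgotten that the conjugates commute.
theorem not_commute_of_hom {τ : G} {p q : ℤ}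
    (hmem : ∀ i : ℤ, t ^ i * τ * (t ^ i)⁻¹ ∈ M ↔ i ∈ Set.Icc p q) (hp : p ≤ 0) (hq : 0 ≤ q)
    (f : G →* ConjHNN M t) (hft : f t = HNNExtension.t) (hfτ : f τ = base M t τ) :
    ¬ Commute (t ^ (q + 1) * τ * (t ^ (q + 1))⁻¹) (t ^ p * τ * (t ^ p)⁻¹) := by
  have hf : ∀ i ∈ Set.Icc p q, f (t ^ i * τ * (t ^ i)⁻¹) = base M t (t ^ i * τ * (t ^ i)⁻¹) := by
    intro i hi
    rw [base_zpow_conj fun j hj => (hmem j).2 (Set.uIcc_subset_Icc ⟨hp, hq⟩ hi hj)]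
    simp only [map_mul, map_inv, map_zpow, hft, hfτ]
  have conj_succ : t ^ (q + 1) * τ * (t ^ (q + 1))⁻¹ = t * (t ^ q * τ * (t ^ q)⁻¹) * t⁻¹ := by group
  have conj_pred : t ^ (p - 1) * τ * (t ^ (p - 1))⁻¹ = t⁻¹ * (t ^ p * τ * (t ^ p)⁻¹) * t := by group
  have hpI : p ∈ Set.Icc p q := ⟨le_rfl, hp.trans hq⟩
  have hqI : q ∈ Set.Icc p q := ⟨hp.trans hq, le_rfl⟩
  intro hcomm
  have hcomm := hcomm.map f
  rw [conj_succ, map_mul, map_mul, map_inv, hft, hf q hqI, hf p hpI] at hcomm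
  refine not_commute_t_conj_base ((hmem q).2 hqI) ((hmem p).2 hpI) ?_ ?_ hcomm
  · rw [← conj_succ, hmem]
    simp
  · rw [← conj_pred, hmem]
    simp

end ConjHNN

end ConjHNN

/-! ### Obstructions to finite presentability -/

section FinitePresentation

theorem GroupFP.exists_monoidHom_eventually_eq {G : Type*} [Group G] (hG : GroupFP G)
    {κ : Type*} {l : Filter κ} {H : κ → Type*} [∀ k, Group (H k)] (F : ∀ k, G → H k)
    (hF : ∀ g h, ∀ᶠ k in l, F k (g * h) = F k g * F k h) :
    ∃ f : ∀ k, G →* H k, ∀ g, ∀ᶠ k in l, f k g = F k g := by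
  classical
  obtain ⟨m, π, hπ, S, hS⟩ := hG
  have hF_one : ∀ᶠ k in l, F k 1 = 1 := (hF 1 1).mono fun k hk => by simpa using hk
  have hF_inv (g : G) : ∀ᶠ k in l, F k g⁻¹ = (F k g)⁻¹ := by
    filter_upwards [hF g⁻¹ g, hF_one] with k hk hk1
    rw [eq_inv_iff_mul_eq_one, ← hk, inv_mul_cancel, hk1]
  let φ (k : κ) : FreeGroup (Fin m) →* H k := FreeGroup.lift fun i => F k (π (FreeGroup.of i))
  have hφ (w : FreeGroup (Fin m)) : ∀ᶠ k in l, φ k w = F k (π w) := by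
    induction w using FreeGroup.induction_on with
    | C1 => simpa only [map_one, eq_comm] using hF_one
    | of i => exact Eventually.of_forall fun k => FreeGroup.lift_apply_of
    | inv_of i ih =>
      filter_upwards [ih, hF_inv (π (FreeGroup.of i))] with k hk hk'
      rw [map_inv, map_inv, hk, hk']
    | mul v w hv hw =>
      filter_upwards [hv, hw, hF (π v) (π w)] with k hkv hkw hk
      rw [map_mul, map_mul, hkv, hkw, hk]
  have hker : ∀ᶠ k in l, π.ker ≤ (φ k).ker := by
    have hrel : ∀ᶠ k in l, ∀ r ∈ S, φ k r = 1 := by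
      rw [Finset.eventually_all]
      intro r hr
      have hπr : π r = 1 := hS.le (Subgroup.subset_normalClosure hr)
      filter_upwards [hφ r, hF_one] with k hk hk1
      rw [hk, hπr, hk1]
    filter_upwards [hrel] with k hk
    rw [← hS]
    exact Subgroup.normalClosure_le_normal hk
  refine ⟨fun k => if h : π.ker ≤ (φ k).ker then π.liftOfSurjective hπ ⟨φ k, h⟩ else 1, fun g => ?_⟩
  obtain ⟨w, rfl⟩ := hπ g
  filter_upwards [hker, hφ w] with k hk hkw
  rw [dif_pos hk, ← hkw]
  exact π.liftOfRightInverse_comp_apply _ _ ⟨φ k, hk⟩ w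

variable {G : Type*} [Group G] {κ : Type*} {l : Filter κ} {N : κ → Subgroup G}
  {α : G →* Multiplicative ℤ} {t : G}

namespace ConjHNN

/-- The partial section `n * t ^ a ↦ n * t ^ a` of the natural map `ConjHNN M t → G`, where
`a = α g` and `n = g * (t ^ a)⁻¹`. It is meaningful only for `n ∈ M`. -/
noncomputable def partialSection (M : Subgroup G) (α : G →* Multiplicative ℤ) (t g : G) :
    ConjHNN M t :=
  base M t (g * (t ^ (α g).toAdd)⁻¹) * HNNExtension.t ^ (α g).toAdd

lemma eventually_partialSection_mul (ht : α t = ofAdd 1)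
    (hN : ∀ g, α g = 1 → ∀ᶠ k in l, g ∈ N k) (g h : G) :
    ∀ᶠ k in l, partialSection (N k) α t (g * h) =
      partialSection (N k) α t g * partialSection (N k) α t h := by
  set a := (α g).toAdd with ha
  set b := (α h).toAdd with hb
  have hα_part (g : G) : α (g * (t ^ (α g).toAdd)⁻¹) = 1 := by
    rw [map_mul, map_inv, map_zpow, ht, ← ofAdd_zsmul]
    simp
  have hconj : ∀ᶠ k in l, ∀ i ∈ Set.uIcc 0 a, t ^ i * (h * (t ^ b)⁻¹) * (t ^ i)⁻¹ ∈ N k := by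
    rw [eventually_all_finite (Set.finite_uIcc 0 a)]
    intro i _
    exact hN _ (by rw [map_mul, map_mul, hα_part h, map_inv]; simp)
  filter_upwards [hN _ (hα_part g), hconj] with k hg hh
  have hsplit : g * h * (t ^ (a + b))⁻¹ =
      g * (t ^ a)⁻¹ * (t ^ a * (h * (t ^ b)⁻¹) * (t ^ a)⁻¹) := by group
  rw [partialSection, map_mul, toAdd_mul, hsplit, base_mul hg (hh a Set.right_mem_uIcc),
    base_zpow_conj hh, partialSection, partialSection, zpow_add]
  simp only [← ha, ← hb, mul_assoc, inv_mul_cancel_left]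

end ConjHNN

theorem not_groupFP_of_ker_filtration [NeBot l] (ht : α t = ofAdd 1)
    (hN : ∀ g, α g = 1 → ∀ᶠ k in l, g ∈ N k) {τ : G} (hτ : α τ = 1)
    (hwindow : ∀ᶠ k in l, ∃ p q : ℤ,
      (∀ i : ℤ, t ^ i * τ * (t ^ i)⁻¹ ∈ N k ↔ i ∈ Set.Icc p q) ∧
      Commute (t ^ (q + 1) * τ * (t ^ (q + 1))⁻¹) (t ^ p * τ * (t ^ p)⁻¹)) :
    ¬ GroupFP G := by
  intro hG
  obtain ⟨f, hf⟩ := hG.exists_monoidHom_eventually_eq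
    (fun k => ConjHNN.partialSection (N k) α t) (ConjHNN.eventually_partialSection_mul ht hN)
  obtain ⟨k, hft, hfτ, hτk, p, q, hmem, hcomm⟩ :=
    ((hf t).and ((hf τ).and ((hN τ hτ).and hwindow))).exists
  have h0 : (0 : ℤ) ∈ Set.Icc p q := (hmem 0).1 (by simpa using hτk)
  refine ConjHNN.not_commute_of_hom hmem h0.1 h0.2 (f k) ?_ ?_ hcomm
  · rw [hft]
    simp [ConjHNN.partialSection, ht, ConjHNN.base_one]
  · rw [hfτ]
    simp [ConjHNN.partialSection, hτ]

end FinitePresentation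

section Line

variable {X : Type*} {K : Subgroup (Equiv.Perm X)} {t : Equiv.Perm X} {c : ℤ → X}

lemma exists_translation_hom (hc : c.Injective)
    (hK : ∀ g ∈ K, ∃ a : ℤ, ∀ᶠ i in cofinite, g (c i) = c (i + a)) :
    ∃ α : K →* Multiplicative ℤ, ∀ g : K, ∀ᶠ i in cofinite, g.1 (c i) = c (i + (α g).toAdd) := by
  choose a ha using fun g : K => hK g g.2
  refine ⟨MonoidHom.mk' (fun g => ofAdd (a g)) fun g h => ?_, ha⟩
  have hg : ∀ᶠ i in cofinite, g.1 (c (i + a h)) = c (i + a h + a g) :=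
    (add_left_injective (a h)).tendsto_cofinite.eventually (ha g)
  obtain ⟨i, hgi, hhi, hghi⟩ := (hg.and ((ha h).and (ha (g * h)))).exists
  rw [Subgroup.coe_mul, Equiv.Perm.mul_apply, hhi, hgi] at hghi
  rw [← ofAdd_add, ofAdd.apply_eq_iff_eq]
  linarith [hc hghi]

lemma zpow_apply_line (htc : ∀ i, t (c i) = c (i + 1)) (b i : ℤ) : (t ^ b) (c i) = c (i + b) := by
  induction b generalizing i with
  | zero => simp
  | succ b ih => rw [zpow_add_one, Equiv.Perm.mul_apply, htc, ih, add_right_comm, add_assoc]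
  | pred b ih =>
    have htc_inv : t⁻¹ (c i) = c (i - 1) := by rw [Equiv.Perm.inv_eq_iff_eq, htc, sub_add_cancel]
    rw [zpow_sub_one, Equiv.Perm.mul_apply, htc_inv, ih]
    congr 1
    ring

lemma zpow_conj_swap_line [DecidableEq X] (htc : ∀ i, t (c i) = c (i + 1)) (b : ℤ) :
    t ^ b * Equiv.swap (c 0) (c 1) * (t ^ b)⁻¹ = Equiv.swap (c b) (c (b + 1)) := by
  rw [← Equiv.swap_apply_apply, zpow_apply_line htc, zpow_apply_line htc, zero_add, add_comm 1]

/-- The elements of `K` that fix every point of the line `c` outside the window `[-k, k + 1]`. -/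
def windowStabilizer (K : Subgroup (Equiv.Perm X)) (c : ℤ → X) (k : ℤ) : Subgroup K :=
  fixingSubgroup K (c '' (Set.Icc (-k) (k + 1))ᶜ)

lemma mem_windowStabilizer {k : ℤ} {g : K} :
    g ∈ windowStabilizer K c k ↔ ∀ i ∉ Set.Icc (-k) (k + 1), g.1 (c i) = c i := by
  rw [windowStabilizer, mem_fixingSubgroup_iff, Set.forall_mem_image]
  rfl

lemma eventually_mem_windowStabilizer {g : K} (hg : ∀ᶠ i in cofinite, g.1 (c i) = c i) :
    ∀ᶠ k in atTop, g ∈ windowStabilizer K c k := by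
  rw [Int.cofinite_eq, eventually_sup, eventually_atBot, eventually_atTop] at hg
  obtain ⟨⟨p, hp⟩, q, hq⟩ := hg
  filter_upwards [eventually_ge_atTop (-p), eventually_ge_atTop q] with k hpk hqk
  refine mem_windowStabilizer.2 fun i hi => ?_
  rw [Set.mem_Icc, not_and_or, not_le, not_le] at hi
  rcases hi with hi | hi
  · exact hp i (by omega)
  · exact hq i (by omega)

lemma mem_windowStabilizer_iff_of_coe_eq_swap [DecidableEq X] (hc : c.Injective) {k i : ℤ} {g : K}
    (hg : (g : Equiv.Perm X) = Equiv.swap (c i) (c (i + 1))) :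
    g ∈ windowStabilizer K c k ↔ i ∈ Set.Icc (-k) k := by
  rw [mem_windowStabilizer, hg]
  simp only [Set.mem_Icc]
  constructor
  · intro h
    by_contra hi
    by_cases hi' : -k ≤ i ∧ i ≤ k + 1
    · have := h (i + 1) (by omega)
      rw [Equiv.swap_apply_right, hc.eq_iff] at this
      omega
    · have := h i hi'
      rw [Equiv.swap_apply_left, hc.eq_iff] at this
      omega
  · intro hi j hj
    exact Equiv.swap_apply_of_ne_of_ne (hc.ne (by omega)) (hc.ne (by omega))

theorem not_groupFP_of_line [DecidableEq X] (hc : c.Injective) (htK : t ∈ K)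
    (htc : ∀ i, t (c i) = c (i + 1)) (hswap : Equiv.swap (c 0) (c 1) ∈ K)
    (hK : ∀ g ∈ K, ∃ a : ℤ, ∀ᶠ i in cofinite, g (c i) = c (i + a)) : ¬ GroupFP K := by
  obtain ⟨α, hα⟩ := exists_translation_hom hc hK
  have hα_eq {g : K} {a : ℤ} (hg : ∀ᶠ i in cofinite, g.1 (c i) = c (i + a)) : α g = ofAdd a := by
    obtain ⟨i, hi, hi'⟩ := (hg.and (hα g)).exists
    exact toAdd.injective (add_left_cancel (hc (hi'.symm.trans hi)))
  set τ : K := ⟨Equiv.swap (c 0) (c 1), hswap⟩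
  have hτ : ∀ᶠ i in cofinite, τ.1 (c i) = c (i + 0) := by
    filter_upwards [(Set.finite_singleton 0).eventually_cofinite_notMem,
      (Set.finite_singleton 1).eventually_cofinite_notMem] with i h0 h1
    rw [add_zero]
    exact Equiv.swap_apply_of_ne_of_ne (hc.ne h0) (hc.ne h1)
  have hconj (i : ℤ) : (((⟨t, htK⟩ : K) ^ i * τ * (⟨t, htK⟩ ^ i)⁻¹ : K) : Equiv.Perm X) =
      Equiv.swap (c i) (c (i + 1)) := zpow_conj_swap_line htc i
  refine not_groupFP_of_ker_filtration (l := atTop) (N := windowStabilizer K c)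
    (hα_eq (g := ⟨t, htK⟩) (Eventually.of_forall htc)) (fun g hg => ?_) (hα_eq hτ) ?_
  · refine eventually_mem_windowStabilizer ((hα g).mono fun i hi => ?_)
    rw [hi, hg, toAdd_one, add_zero]
  · filter_upwards [eventually_ge_atTop 1] with k hk
    refine ⟨-k, k, fun i => mem_windowStabilizer_iff_of_coe_eq_swap hc (hconj i), ?_⟩
    refine Commute.of_map K.subtype_injective ?_
    rw [Subgroup.subtype_apply, Subgroup.subtype_apply, hconj, hconj]
    refine (Equiv.Perm.disjoint_swap_swap ?_).commute
    simp only [List.nodup_cons, List.mem_cons, List.not_mem_nil, hc.eq_iff]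
    grind

end Line

/-! ### Shifts of the rays -/

section Rays

variable {n : ℕ} {f g : Fin n × ℕ → Fin n × ℕ} {i : Fin n} {m k : ℤ}

/-- `f` eventually shifts the `i`-th ray by `m`. (The truncation in `Int.toNat` only affects
finitely many `x`.) -/
def ShiftsRay (f : Fin n × ℕ → Fin n × ℕ) (i : Fin n) (m : ℤ) : Prop :=
  ∀ᶠ x : ℕ in atTop, f (i, x) = (i, (x + m).toNat)

lemma tendsto_add_toNat_atTop (m : ℤ) : Tendsto (fun x : ℕ => (x + m).toNat) atTop atTop := by
  refine tendsto_atTop.2 fun b => ?_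
  filter_upwards [eventually_ge_atTop (b - m).toNat] with x hx
  omega

lemma shiftsRay_iff :
    ShiftsRay f i m ↔ ∃ N : ℕ, ∀ x : ℕ, N ≤ x → (f (i, x)).1 = i ∧ ((f (i, x)).2 : ℤ) = x + m := by
  rw [ShiftsRay, ← eventually_atTop]
  refine eventually_congr ?_
  filter_upwards [eventually_ge_atTop (-m).toNat] with x hx
  rw [Prod.ext_iff]
  exact and_congr_right fun _ => by dsimp only; omega

lemma isEvTrans_iff : IsEvTrans f ↔ ∀ i, ∃ m, ShiftsRay f i m := by
  simp only [IsEvTrans, shiftsRay_iff]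

namespace ShiftsRay

lemma comp (hf : ShiftsRay f i m) (hg : ShiftsRay g i k) : ShiftsRay (f ∘ g) i (m + k) := by
  filter_upwards [hg, (tendsto_add_toNat_atTop k).eventually hf,
    eventually_ge_atTop (-k).toNat] with x hgx hfx hx
  rw [Function.comp_apply, hgx, hfx]
  congr 1
  omega

lemma unique (hm : ShiftsRay f i m) (hk : ShiftsRay f i k) : m = k := by
  obtain ⟨x, hxm, hxk, hx⟩ :=
    (hm.and (hk.and (eventually_ge_atTop (max (-m).toNat (-k).toNat)))).exists
  have := congrArg Prod.snd (hxm.symm.trans hxk)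
  dsimp only at this
  omega

lemma shiftsRay_chiF (hf : ShiftsRay f i m) : ShiftsRay f i (chiF n i f) := by
  have h : ∃ m : ℤ, ∃ N : ℕ, ∀ x : ℕ, N ≤ x → (f (i, x)).1 = i ∧ ((f (i, x)).2 : ℤ) = x + m :=
    ⟨m, shiftsRay_iff.1 hf⟩
  rw [chiF, dif_pos h, shiftsRay_iff]
  exact h.choose_spec

lemma chiF_eq (hf : ShiftsRay f i m) : chiF n i f = m := hf.shiftsRay_chiF.unique hf

end ShiftsRay

lemma IsEvTrans.shiftsRay (hf : IsEvTrans f) (i : Fin n) : ShiftsRay f i (chiF n i f) :=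
  (isEvTrans_iff.1 hf i).choose_spec.shiftsRay_chiF

/-- The homomorphism `(χ_1, …, χ_n) : H_n → ℤⁿ`. -/
noncomputable def shiftHom (n : ℕ) : Houghton n →* Multiplicative (Fin n → ℤ) :=
  MonoidHom.mk' (fun g => ofAdd fun i => chiF n i g.1) fun g h =>
    congrArg ofAdd (funext fun i => ((g.2.shiftsRay i).comp (h.2.shiftsRay i)).chiF_eq)

end Rays

/-! ### Finite generation -/

section FiniteGeneration

theorem fg_of_fg_range_of_ker_le {G A : Type*} [Group G] [Group A] (f : G →* A) (hf : f.range.FG)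
    {H : Subgroup G} (hH : H.FG) (hker : f.ker ≤ H) : Group.FG G := by
  classical
  obtain ⟨T, hT⟩ := hf
  have hTf : (T : Set A) ⊆ f '' Set.univ := by
    rw [Set.image_univ, ← MonoidHom.coe_range, ← hT]
    exact Subgroup.subset_closure
  obtain ⟨S, -, rfl⟩ := Finset.subset_set_image_iff.1 hTf
  rw [Finset.coe_image, ← MonoidHom.map_closure, Subgroup.map_eq_range_iff] at hT
  refine ⟨?_⟩
  rw [← (hT.mono_right hker).eq_top]
  exact Subgroup.FG.sup ⟨S, rfl⟩ hH

theorem subgroup_fg_multiplicative {M : Type*} [AddCommGroup M] [IsNoetherian ℤ M]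
    (H : Subgroup (Multiplicative M)) : H.FG :=
  (AddSubgroup.fg_iff_mul_fg _).1 ((Submodule.fg_iff_addSubgroup_fg _).1
    (IsNoetherian.noetherian (AddSubgroup.toIntSubmodule (Subgroup.toAddSubgroup' H))))

variable {X : Type*} [DecidableEq X]

lemma swap_apply_mem_of_mem_closure {H : Subgroup (Equiv.Perm X)} {S : Set (Equiv.Perm X)}
    (hSH : S ⊆ H) {x : X} (hS : ∀ g ∈ S, Equiv.swap x (g x) ∈ H) {g : Equiv.Perm X}
    (hg : g ∈ Subgroup.closure S) : Equiv.swap x (g x) ∈ H := by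
  have hle : Subgroup.closure S ≤ H := (Subgroup.closure_le H).2 hSH
  induction hg using Subgroup.closure_induction with
  | mem g hg => exact hS g hg
  | one =>
    rw [Equiv.Perm.one_apply, Equiv.swap_self]
    exact H.one_mem
  | mul g h hg _ ihg ihh =>
    refine SubmonoidClass.swap_mem_trans H ihg ?_
    rw [Equiv.Perm.mul_apply, Equiv.swap_apply_apply]
    exact H.mul_mem (H.mul_mem (hle hg) ihh) (H.inv_mem (hle hg))
  | inv g hg ih =>
    have hswap : Equiv.swap x (g⁻¹ x) = g⁻¹ * Equiv.swap x (g x) * g⁻¹⁻¹ := by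
      rw [← Equiv.swap_apply_apply, Equiv.Perm.inv_def, Equiv.symm_apply_apply, Equiv.swap_comm]
    rw [hswap]
    exact H.mul_mem (H.mul_mem (H.inv_mem (hle hg)) ih) (H.inv_mem (H.inv_mem (hle hg)))

theorem fg_sup_closure_isSwap {Γ : Subgroup (Equiv.Perm X)} (hΓ : Γ.FG) {O : Set X}
    (hO : O.Finite) (horbit : ∀ x, ∃ o ∈ O, x ∈ MulAction.orbit Γ o) :
    (Γ ⊔ Subgroup.closure {σ : Equiv.Perm X | σ.IsSwap}).FG := by
  obtain ⟨S, rfl, hS⟩ := (Subgroup.fg_iff Γ).1 hΓ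
  set P : Set X := O ∪ Set.image2 (fun g x => g x) S O
  have hP : P.Finite := hO.union (hS.image2 _ hO)
  set T : Set (Equiv.Perm X) := Set.image2 Equiv.swap P P
  set H := Subgroup.closure S ⊔ Subgroup.closure T with hH
  have hSH : S ⊆ H := Subgroup.subset_closure.trans (SetLike.coe_subset_coe.2 le_sup_left)
  have hTH : T ⊆ H := Subgroup.subset_closure.trans (SetLike.coe_subset_coe.2 le_sup_right)
  have hrep (x : X) : ∃ o ∈ O, Equiv.swap o x ∈ H := by
    obtain ⟨o, ho, ⟨g, hg⟩, rfl⟩ := horbit x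
    refine ⟨o, ho, swap_apply_mem_of_mem_closure hSH (fun s hs => hTH ?_) hg⟩
    exact Set.mem_image2_of_mem (Or.inl ho) (Or.inr (Set.mem_image2_of_mem hs ho))
  have hswap (x y : X) : Equiv.swap x y ∈ H := by
    obtain ⟨o, ho, hox⟩ := hrep x
    obtain ⟨o', ho', hoy⟩ := hrep y
    have hoo' : Equiv.swap o o' ∈ H := hTH (Set.mem_image2_of_mem (Or.inl ho) (Or.inl ho'))
    rw [Equiv.swap_comm] at hox
    exact SubmonoidClass.swap_mem_trans H hox (SubmonoidClass.swap_mem_trans H hoo' hoy)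
  suffices h : Subgroup.closure S ⊔ Subgroup.closure {σ : Equiv.Perm X | σ.IsSwap} = H by
    rw [h, hH, ← Subgroup.closure_union]
    exact (Subgroup.fg_iff _).2 ⟨_, rfl, hS.union (hP.image2 _ hP)⟩
  refine le_antisymm (sup_le le_sup_left ((Subgroup.closure_le H).2 ?_))
    (sup_le_sup_left ((Subgroup.closure_le _).2 ?_) _)
  · rintro _ ⟨x, y, -, rfl⟩
    exact hswap x y
  · rintro _ ⟨x, -, y, -, rfl⟩
    exact mem_closure_isSwap'.2 finite_compl_fixedBy_swap

end FiniteGeneration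

section HoughtonSubgroups

variable {n : ℕ}

lemma mem_closure_isSwap_iff_shiftsRay_zero {g : Equiv.Perm (Fin n × ℕ)} :
    g ∈ Subgroup.closure {σ : Equiv.Perm (Fin n × ℕ) | σ.IsSwap} ↔ ∀ i, ShiftsRay g i 0 := by
  rw [mem_closure_isSwap']
  simp only [ShiftsRay, add_zero, Int.toNat_natCast]
  constructor
  · intro hg i
    rw [← Nat.cofinite_eq_atTop]
    filter_upwards [(hg.preimage (Prod.mk_right_injective i).injOn).eventually_cofinite_notMem]
      with x hx
    exact not_not.1 hx
  · intro hg
    obtain ⟨N, hN⟩ := eventually_atTop.1 (eventually_all.2 hg)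
    refine (Set.finite_univ.prod (Set.finite_lt_nat N)).subset ?_
    rintro ⟨i, x⟩ hx
    exact ⟨Set.mem_univ i, not_le.1 fun hNx => hx (hN x hNx i)⟩

lemma exists_orbit_representative_lt {Γ : Subgroup (Equiv.Perm (Fin n × ℕ))}
    {g : Equiv.Perm (Fin n × ℕ)} (hg : g ∈ Γ) {i : Fin n} {m : ℤ} (hgi : ShiftsRay g i m)
    (hm : m ≠ 0) : ∃ N : ℕ, ∀ x : ℕ, ∃ y < N, (i, x) ∈ MulAction.orbit Γ (i, y) := by
  have hdescend : ∀ᶠ x : ℕ in atTop, ∃ y < x, (i, x) ∈ MulAction.orbit Γ (i, y) := by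
    rcases hm.lt_or_gt with hm | hm
    · filter_upwards [hgi, eventually_gt_atTop 0] with x hx hx0
      exact ⟨(x + m).toNat, by omega, MulAction.mem_orbit_symm.1 ⟨⟨g, hg⟩, hx⟩⟩
    · filter_upwards [(tendsto_add_toNat_atTop (-m)).eventually hgi, eventually_ge_atTop m.toNat]
        with x hx hxm
      refine ⟨(x + -m).toNat, by omega, ⟨g, hg⟩, hx.trans ?_⟩
      congr 1
      omega
  obtain ⟨N, hN⟩ := eventually_atTop.1 hdescend
  refine ⟨N, fun x => ?_⟩
  induction x using Nat.strong_induction_on with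
  | _ x ih =>
    rcases lt_or_ge x N with hx | hx
    · exact ⟨x, hx, MulAction.mem_orbit_self _⟩
    · obtain ⟨y, hyx, hxy⟩ := hN x hx
      obtain ⟨z, hz, hyz⟩ := ih y hyx
      exact ⟨z, hz, MulAction.orbit_eq_iff.2 hyz ▸ hxy⟩

theorem fg_of_forall_exists_chiF_ne_zero {K : Subgroup (Equiv.Perm (Fin n × ℕ))}
    (hK : K ≤ Houghton n) (hswap : Subgroup.closure {σ : Equiv.Perm (Fin n × ℕ) | σ.IsSwap} ≤ K)
    (hχ : ∀ i, ∃ g ∈ K, chiF n i g ≠ 0) : Group.FG K := by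
  choose g hgK hg using hχ
  set Γ := Subgroup.closure (Set.range g)
  have hΓK : Γ ≤ K := (Subgroup.closure_le K).2 (Set.range_subset_iff.2 hgK)
  have horbit (i : Fin n) : ∃ N : ℕ, ∀ x : ℕ, ∃ y < N, (i, x) ∈ MulAction.orbit Γ (i, y) :=
    exists_orbit_representative_lt (Subgroup.subset_closure (Set.mem_range_self i))
      (IsEvTrans.shiftsRay (hK (hgK i)) i) (hg i)
  choose N hN using horbit
  set H := Γ ⊔ Subgroup.closure {σ : Equiv.Perm (Fin n × ℕ) | σ.IsSwap}
  have hHK : H ≤ K := sup_le hΓK hswap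
  have hH : H.FG := by
    refine fg_sup_closure_isSwap ((Subgroup.fg_iff _).2 ⟨_, rfl, Set.finite_range g⟩)
      (Set.finite_iUnion fun i => (Set.finite_lt_nat (N i)).image (Prod.mk i)) fun ⟨i, x⟩ => ?_
    obtain ⟨y, hy, hxy⟩ := hN i x
    exact ⟨(i, y), Set.mem_iUnion.2 ⟨i, y, hy, rfl⟩, hxy⟩
  refine fg_of_fg_range_of_ker_le ((shiftHom n).comp (Subgroup.inclusion hK))
    (subgroup_fg_multiplicative _) (H := H.subgroupOf K) ?_ fun h hh => ?_
  · rw [← Group.fg_iff_subgroup_fg] at hH ⊢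
    exact Group.fg_of_surjective (f := (Subgroup.subgroupOfEquivOfLe hHK).symm.toMonoidHom)
      (Subgroup.subgroupOfEquivOfLe hHK).symm.surjective
  · refine Subgroup.mem_subgroupOf.2 (Subgroup.mem_sup_right ?_)
    have hχ : ∀ i, chiF n i h = 0 := congrFun (ofAdd.injective hh)
    exact mem_closure_isSwap_iff_shiftsRay_zero.2 fun i => hχ i ▸ IsEvTrans.shiftsRay (hK h.2) i

end HoughtonSubgroups

/-! ### The kernel of `χ_a + s χ_b` -/

section Siphon

variable {n : ℕ} {a b d : Fin n}

/-- The permutation moving ray `a` down by `r + 1` and rays `b` and `d` up by `1` and `r`, the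
first `r + 1` points of ray `a` filling the gaps that open on rays `b` and `d`. -/
def siphon (hab : a ≠ b) (had : a ≠ d) (hbd : b ≠ d) (r : ℕ) : Equiv.Perm (Fin n × ℕ) where
  toFun p :=
    if p.1 = a then
      if r < p.2 then (a, p.2 - (r + 1)) else if p.2 = 0 then (b, 0) else (d, p.2 - 1)
    else if p.1 = b then (b, p.2 + 1)
    else if p.1 = d then (d, p.2 + r)
    else p
  invFun p :=
    if p.1 = a then (a, p.2 + (r + 1))
    else if p.1 = b then if p.2 = 0 then (a, 0) else (b, p.2 - 1)
    else if p.1 = d then if p.2 < r then (a, p.2 + 1) else (d, p.2 - r)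
    else p
  left_inv := by
    rintro ⟨i, x⟩
    grind
  right_inv := by
    rintro ⟨i, x⟩
    grind

section Apply

variable (hab : a ≠ b) (had : a ≠ d) (hbd : b ≠ d) (r : ℕ)

lemma siphon_apply_source_of_lt {r x : ℕ} (hx : r < x) :
    siphon hab had hbd r (a, x) = (a, x - (r + 1)) := by
  simp [siphon, hx]

lemma siphon_apply_source_zero : siphon hab had hbd r (a, 0) = (b, 0) := by
  simp [siphon]

lemma siphon_apply_line (x : ℕ) : siphon hab had hbd r (b, x) = (b, x + 1) := by
  simp [siphon, hab.symm]

lemma siphon_apply_rest (x : ℕ) : siphon hab had hbd r (d, x) = (d, x + r) := by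
  simp [siphon, had.symm, hbd.symm]

lemma siphon_apply_of_ne {p : Fin n × ℕ} (ha : p.1 ≠ a) (hb : p.1 ≠ b) (hd : p.1 ≠ d) :
    siphon hab had hbd r p = p := by
  simp [siphon, ha, hb, hd]

lemma shiftsRay_siphon_source : ShiftsRay (siphon hab had hbd r) a (-(r + 1)) := by
  filter_upwards [eventually_gt_atTop r] with x hx
  rw [siphon_apply_source_of_lt _ _ _ hx]
  congr 1
  omega

lemma shiftsRay_siphon_line : ShiftsRay (siphon hab had hbd r) b 1 :=
  Eventually.of_forall (siphon_apply_line hab had hbd r)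

lemma shiftsRay_siphon_rest : ShiftsRay (siphon hab had hbd r) d r :=
  Eventually.of_forall (siphon_apply_rest hab had hbd r)

lemma siphon_mem_houghton : siphon hab had hbd r ∈ Houghton n := by
  refine isEvTrans_iff.2 fun i => ?_
  obtain rfl | hia := eq_or_ne i a
  · exact ⟨_, shiftsRay_siphon_source hab had hbd r⟩
  obtain rfl | hib := eq_or_ne i b
  · exact ⟨_, shiftsRay_siphon_line hab had hbd r⟩
  obtain rfl | hid := eq_or_ne i d
  · exact ⟨_, shiftsRay_siphon_rest hab had hbd r⟩
  · exact ⟨0, Eventually.of_forall fun x => siphon_apply_of_ne hab had hbd r hia hib hid⟩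

end Apply

/-- An orbit of every `siphon hab had hbd r`, indexed so that the siphon translates it by `1`: it
runs through every `(r + 1)`-st point of ray `a` towards the origin, then out along ray `b`. -/
def siphonLine (a b : Fin n) (r : ℕ) (i : ℤ) : Fin n × ℕ :=
  if 0 ≤ i then (b, i.toNat) else (a, (r + 1) * (-i - 1).toNat)

lemma siphonLine_of_nonneg {r : ℕ} {i : ℤ} (hi : 0 ≤ i) : siphonLine a b r i = (b, i.toNat) :=
  if_pos hi

lemma siphonLine_of_neg {r : ℕ} {i : ℤ} (hi : i < 0) :
    siphonLine a b r i = (a, (r + 1) * (-i - 1).toNat) :=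
  if_neg hi.not_ge

lemma siphonLine_injective (hab : a ≠ b) (r : ℕ) : (siphonLine a b r).Injective := by
  intro i j hij
  rcases lt_or_ge i 0 with hi | hi <;> rcases lt_or_ge j 0 with hj | hj <;>
    simp only [siphonLine_of_nonneg, siphonLine_of_neg, hi, hj, Prod.mk.injEq, true_and, hab,
      hab.symm, false_and, mul_eq_mul_left_iff, Nat.succ_ne_zero, or_false] at hij
  · omega
  · omega

lemma siphon_siphonLine (hab : a ≠ b) (had : a ≠ d) (hbd : b ≠ d) (r : ℕ) (i : ℤ) :
    siphon hab had hbd r (siphonLine a b r i) = siphonLine a b r (i + 1) := by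
  rcases lt_trichotomy i (-1) with hi | rfl | hi
  · obtain ⟨k, rfl⟩ : ∃ k : ℕ, i = -k - 2 := ⟨(-i - 2).toNat, by omega⟩
    have hk : (- (-(k : ℤ) - 2) - 1).toNat = k + 1 := by omega
    have hk' : (- (-(k : ℤ) - 2 + 1) - 1).toNat = k := by omega
    rw [siphonLine_of_neg (by omega), siphonLine_of_neg (by omega), hk, hk', mul_add_one,
      siphon_apply_source_of_lt _ _ _ (by omega), Nat.add_sub_cancel]
  · exact siphon_apply_source_zero hab had hbd r
  · rw [siphonLine_of_nonneg (by omega), siphonLine_of_nonneg (by omega), siphon_apply_line]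
    congr 1
    omega

lemma ShiftsRay.apply_siphonLine {f : Fin n × ℕ → Fin n × ℕ} {r : ℕ} {m : ℤ}
    (ha : ShiftsRay f a (-((r + 1) * m))) (hb : ShiftsRay f b m) :
    ∀ᶠ i in cofinite, f (siphonLine a b r i) = siphonLine a b r (i + m) := by
  rw [Int.cofinite_eq, eventually_sup]
  constructor
  · obtain ⟨N, hN⟩ := eventually_atTop.1 ha
    filter_upwards [eventually_lt_atBot 0, eventually_lt_atBot (-m), eventually_lt_atBot (-N : ℤ)]
      with i hi hm hiN
    obtain ⟨k, hk⟩ : ∃ k : ℕ, -i - 1 = k := ⟨(-i - 1).toNat, by omega⟩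
    obtain ⟨k', hk'⟩ : ∃ k' : ℕ, -(i + m) - 1 = k' := ⟨(-(i + m) - 1).toNat, by omega⟩
    have hNk : N ≤ (r + 1) * k := by nlinarith
    have hshift : (((r + 1) * k : ℕ) : ℤ) + -((r + 1) * m) = ((r + 1) * k' : ℕ) := by
      push_cast
      rw [← hk, ← hk']
      ring
    rw [siphonLine_of_neg hi, siphonLine_of_neg (by omega), hk, hk', Int.toNat_natCast,
      Int.toNat_natCast, hN _ hNk, hshift, Int.toNat_natCast]
  · obtain ⟨N, hN⟩ := eventually_atTop.1 hb
    filter_upwards [eventually_ge_atTop 0, eventually_ge_atTop (-m), eventually_ge_atTop (N : ℤ)]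
      with i hi hm hiN
    rw [siphonLine_of_nonneg hi, siphonLine_of_nonneg (by omega), hN _ (by omega),
      Int.toNat_of_nonneg hi]

end Siphon

section WeightedKernel

variable {n : ℕ} {a b : Fin n}

/-- The kernel of `χ_a + s χ_b : H_n → ℤ`, regarded as a group of permutations. -/
noncomputable def weightedKernel (a b : Fin n) (s : ℤ) : Subgroup (Equiv.Perm (Fin n × ℕ)) :=
  let χ (i : Fin n) : (Fin n → ℤ) →+ ℤ := Pi.evalAddMonoidHom _ i
  ((χ a + s • χ b).toMultiplicative.comp (shiftHom n)).ker.map (Houghton n).subtype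

lemma mem_weightedKernel {s : ℤ} {η : Equiv.Perm (Fin n × ℕ)} :
    η ∈ weightedKernel a b s ↔ η ∈ Houghton n ∧ chiF n a η + s * chiF n b η = 0 := by
  rw [weightedKernel, Subgroup.mem_map]
  exact ⟨fun ⟨g, hg, hgη⟩ => hgη ▸ ⟨g.2, hg⟩, fun ⟨hη, h⟩ => ⟨⟨η, hη⟩, h, rfl⟩⟩

lemma closure_isSwap_le_weightedKernel (s : ℤ) :
    Subgroup.closure {σ : Equiv.Perm (Fin n × ℕ) | σ.IsSwap} ≤ weightedKernel a b s := by
  intro g hg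
  have hg := mem_closure_isSwap_iff_shiftsRay_zero.1 hg
  refine mem_weightedKernel.2 ⟨isEvTrans_iff.2 fun i => ⟨0, hg i⟩, ?_⟩
  rw [(hg a).chiF_eq, (hg b).chiF_eq, mul_zero, add_zero]

lemma siphon_mem_weightedKernel {d : Fin n} (hab : a ≠ b) (had : a ≠ d) (hbd : b ≠ d) (r : ℕ) :
    siphon hab had hbd r ∈ weightedKernel a b (r + 1) := by
  refine mem_weightedKernel.2 ⟨siphon_mem_houghton hab had hbd r, ?_⟩
  rw [(shiftsRay_siphon_source hab had hbd r).chiF_eq, (shiftsRay_siphon_line _ _ _ r).chiF_eq]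
  ring

theorem fg_weightedKernel (hn : 3 ≤ n) (hab : a ≠ b) {r : ℕ} (hr : r ≠ 0) :
    Group.FG (weightedKernel a b (r + 1)) := by
  obtain ⟨d, hda, hdb⟩ := Fin.exists_ne_and_ne_of_two_lt a b hn
  refine fg_of_forall_exists_chiF_ne_zero (fun g hg => (mem_weightedKernel.1 hg).1)
    (closure_isSwap_le_weightedKernel _) fun i => ?_
  obtain rfl | hia := eq_or_ne i a
  · refine ⟨_, siphon_mem_weightedKernel hab hda.symm hdb.symm r, ?_⟩
    rw [(shiftsRay_siphon_source _ _ _ r).chiF_eq]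
    omega
  obtain rfl | hib := eq_or_ne i b
  · refine ⟨_, siphon_mem_weightedKernel hab hda.symm hdb.symm r, ?_⟩
    rw [(shiftsRay_siphon_line _ _ _ r).chiF_eq]
    exact one_ne_zero
  · refine ⟨_, siphon_mem_weightedKernel hab hia.symm hib.symm r, ?_⟩
    rw [(shiftsRay_siphon_rest _ _ _ r).chiF_eq]
    exact_mod_cast hr

theorem not_groupFP_weightedKernel (hn : 3 ≤ n) (hab : a ≠ b) (r : ℕ) :
    ¬ GroupFP (weightedKernel a b (r + 1)) := by
  obtain ⟨d, hda, hdb⟩ := Fin.exists_ne_and_ne_of_two_lt a b hn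
  refine not_groupFP_of_line (siphonLine_injective hab r)
    (siphon_mem_weightedKernel hab hda.symm hdb.symm r)
    (siphon_siphonLine hab hda.symm hdb.symm r) ?_ fun g hg => ⟨chiF n b g, ?_⟩
  · exact closure_isSwap_le_weightedKernel _ (mem_closure_isSwap'.2 finite_compl_fixedBy_swap)
  · obtain ⟨hgH, hgχ⟩ := mem_weightedKernel.1 hg
    refine ShiftsRay.apply_siphonLine ?_ (IsEvTrans.shiftsRay hgH b)
    rw [← eq_neg_of_add_eq_zero_left hgχ]
    exact IsEvTrans.shiftsRay hgH a

end WeightedKernel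

theorem ker_chi1_add_two_chi2_fg_not_fp_general {n : ℕ} (hn : 3 ≤ n) {a b : Fin n} (hab : a ≠ b)
    {s : ℤ} (hs : 2 ≤ s) :
    Group.FG (weightedKernel a b s) ∧ ¬ GroupFP (weightedKernel a b s) := by
  obtain ⟨r, rfl⟩ : ∃ r : ℕ, s = r + 1 := ⟨(s - 1).toNat, by omega⟩
  exact ⟨fg_weightedKernel hn hab (by omega), not_groupFP_weightedKernel hn hab r⟩

/-- For every `n ≥ 3`, the kernel of `χ_1 + 2·χ_2 : H_n → ℤ` is finitely generated but
not finitely presented. -/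
theorem ker_chi1_add_two_chi2_fg_not_fp (n : ℕ) (hn : 3 ≤ n)
    (K : Subgroup (Equiv.Perm (Fin n × ℕ)))
    (hK : ∀ η : Equiv.Perm (Fin n × ℕ),
      η ∈ K ↔ η ∈ Houghton n ∧
        chiF n ⟨0, by omega⟩ ⇑η + 2 * chiF n ⟨1, by omega⟩ ⇑η = 0) :
    Group.FG ↥K ∧ ¬ GroupFP ↥K := by
  obtain rfl : K = weightedKernel _ _ 2 :=
    Subgroup.ext fun η => (hK η).trans mem_weightedKernel.symm
  exact ker_chi1_add_two_chi2_fg_not_fp_general hn (by simp) le_rfl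
end

section
/- Let n ≥ 2 and let H be a subgroup of the Houghton group H_n containing the commutator subgroup [H_n, H_n]. Then H is finitely generated if and only if χ_i(H) ≠ {0} for every i ∈ {1,…,n}, i.e., if and only if for each i there is some η ∈ H with χ_i(η) ≠ 0. -/
/-!
Let `A` be the group of even finitary permutations; it lies in the commutator subgroup of `H_n`.
The theorem holds for every subgroup `H ≥ A`, and `H` is built from three pieces: its image under
`(χ_1, …, χ_n)` is finitely generated, being a subgroup of `ℤⁿ`; the kernel of that map on `H`
consists of finitary permutations, so it contains `A` with index at most two; and if every `χ_i`
is nonzero on `H`, conjugating by elements that push each ray outwards produces all three-cycles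
from those in a bounded region. Conversely, if `χ_i` vanishes on finitely many generators, they
all fix some point of the `i`-th ray, which `A` does not.
-/

section ThreeCycles

open Equiv
open scoped commutatorElement

variable {α : Type*} [DecidableEq α]

/-- The permutation `x ↦ y ↦ z ↦ x`, written as a product of two transpositions so that no
finiteness of `α` is needed. It is a genuine three-cycle only when `x`, `y`, `z` are distinct. -/
def threeCycle (x y z : α) : Perm α := swap x y * swap y z

lemma conj_threeCycle (g : Perm α) (x y z : α) :
    g * threeCycle x y z * g⁻¹ = threeCycle (g x) (g y) (g z) := by
  simp only [threeCycle, swap_apply_apply]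
  group

lemma threeCycle_apply_left {x y z : α} (hxy : x ≠ y) (hxz : x ≠ z) : threeCycle x y z x = y := by
  simp [threeCycle, swap_apply_of_ne_of_ne hxy hxz]

lemma threeCycle_apply_middle {x y z : α} (hxz : x ≠ z) (hyz : y ≠ z) :
    threeCycle x y z y = z := by
  simp [threeCycle, swap_apply_of_ne_of_ne hxz.symm hyz.symm]

lemma threeCycle_apply_of_ne {x y z w : α} (hx : w ≠ x) (hy : w ≠ y) (hz : w ≠ z) :
    threeCycle x y z w = w := by
  simp [threeCycle, swap_apply_of_ne_of_ne, *]

lemma threeCycle_rotate {x y z : α} (hxy : x ≠ y) (hxz : x ≠ z) :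
    threeCycle y z x = threeCycle x y z := by
  simp only [threeCycle]
  rw [← swap_mul_swap_mul_swap hxy hxz, ← mul_assoc, ← mul_assoc, swap_mul_self, one_mul]

lemma inv_threeCycle {x y z : α} (hxz : x ≠ z) (hyz : y ≠ z) :
    (threeCycle x y z)⁻¹ = threeCycle y x z := by
  rw [threeCycle_rotate hyz.symm hxz.symm]
  simp [threeCycle, swap_comm]

lemma threeCycle_eq_commutator {x y z : α} (hxy : x ≠ y) (hxz : x ≠ z) (hyz : y ≠ z) :
    threeCycle x y z = ⁅swap y z, swap x y⁆ := by
  rw [commutatorElement_def, swap_inv, swap_inv, swap_mul_swap_mul_swap hxy hxz,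
    threeCycle_rotate hxz.symm hyz.symm, threeCycle]

/-- The three-cycles supported in `s`. -/
def threeCyclesOn (s : Set α) : Set (Perm α) :=
  {σ | ∃ x ∈ s, ∃ y ∈ s, ∃ z ∈ s, x ≠ y ∧ x ≠ z ∧ y ≠ z ∧ threeCycle x y z = σ}

lemma threeCyclesOn_mono {s t : Set α} (hst : s ⊆ t) : threeCyclesOn s ⊆ threeCyclesOn t :=
  fun _ ⟨x, hx, y, hy, z, hz, h⟩ ↦ ⟨x, hst hx, y, hst hy, z, hst hz, h⟩

lemma finite_threeCyclesOn {s : Set α} (hs : s.Finite) : (threeCyclesOn s).Finite := by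
  refine ((hs.prod (hs.prod hs)).image fun t ↦ threeCycle t.1 t.2.1 t.2.2).subset ?_
  rintro _ ⟨x, hx, y, hy, z, hz, -, -, -, rfl⟩
  exact ⟨(x, y, z), ⟨hx, hy, hz⟩, rfl⟩

lemma threeCyclesOn_isOfFiniteCharacter (K : Set (Perm α)) :
    Order.IsOfFiniteCharacter {s : Set α | threeCyclesOn s ⊆ K} := by
  refine fun s ↦ ⟨fun hs t hts _ ↦ (threeCyclesOn_mono hts).trans hs, fun h ↦ ?_⟩
  rintro _ ⟨x, hx, y, hy, z, hz, hdist⟩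
  have hfin : threeCyclesOn {x, y, z} ⊆ K := h {x, y, z} (by grind) (Set.toFinite _)
  exact hfin ⟨x, by simp, y, by simp, z, by simp, hdist⟩

lemma threeCyclesOn_insert_subset {K : Subgroup (Perm α)} {s : Set α} {p q c : α}
    (hs : threeCyclesOn s ⊆ K) (hp : p ∈ s) (hq : q ∈ s) (hpq : p ≠ q) (hc : c ∉ s)
    (hK : threeCycle p q c ∈ K) : threeCyclesOn (insert c s) ⊆ K := by
  have hne : ∀ {a}, a ∈ s → a ≠ c := fun ha h ↦ hc (h ▸ ha)
  have symm : ∀ a ∈ s, ∀ b ∈ s, threeCycle a b c ∈ K → threeCycle b a c ∈ K := by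
    intro a ha b hb h
    rw [← inv_threeCycle (hne ha) (hne hb)]
    exact K.inv_mem h
  -- Conjugating `(a b c)` by `(a b x)`, which is in `K`, gives `(b x c)`.
  have move : ∀ a ∈ s, ∀ b ∈ s, ∀ x ∈ s, a ≠ b → b ≠ x →
      threeCycle a b c ∈ K → threeCycle b x c ∈ K := by
    intro a ha b hb x hx hab hbx h
    obtain rfl | hax := eq_or_ne a x
    · exact symm a ha b hb h
    have habx : threeCycle a b x ∈ K := hs ⟨a, ha, b, hb, x, hx, hab, hax, hbx, rfl⟩
    have hconj := K.mul_mem (K.mul_mem habx h) (K.inv_mem habx)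
    rwa [conj_threeCycle, threeCycle_apply_left hab hax, threeCycle_apply_middle hax hbx,
      threeCycle_apply_of_ne (hne ha).symm (hne hb).symm (hne hx).symm] at hconj
  have all : ∀ x ∈ s, ∀ y ∈ s, x ≠ y → threeCycle x y c ∈ K := by
    intro x hx y hy hxy
    obtain rfl | hqx := eq_or_ne q x
    · exact move p hp q hq y hy hpq hxy hK
    · exact move q hq x hx y hy hqx hxy (move p hp q hq x hx hpq hqx hK)
  rintro _ ⟨x, hx, y, hy, z, hz, hxy, hxz, hyz, rfl⟩
  obtain rfl | hz := hz
  · exact all x (hx.resolve_left hxz) y (hy.resolve_left hyz) hxy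
  obtain rfl | hy := hy
  · rw [threeCycle_rotate hxz.symm hyz.symm]
    exact all z hz x (hx.resolve_left hxy) hxz.symm
  obtain rfl | hx := hx
  · rw [← threeCycle_rotate hxy hxz]
    exact all y hy z hz hyz
  exact hs ⟨x, hx, y, hy, z, hz, hxy, hxz, hyz, rfl⟩

variable (α) in
/-- The finitary alternating group of a possibly infinite type, as the subgroup generated by the
three-cycles. -/
def finitaryAlternatingGroup : Subgroup (Perm α) :=
  Subgroup.closure (threeCyclesOn Set.univ)

lemma threeCyclesOn_subset_finitaryAlternatingGroup (s : Set α) :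
    threeCyclesOn s ⊆ finitaryAlternatingGroup α :=
  (threeCyclesOn_mono (Set.subset_univ s)).trans Subgroup.subset_closure

lemma threeCycle_mem_finitaryAlternatingGroup {x y z : α}
    (hxy : x ≠ y) (hxz : x ≠ z) (hyz : y ≠ z) : threeCycle x y z ∈ finitaryAlternatingGroup α :=
  threeCyclesOn_subset_finitaryAlternatingGroup Set.univ
    ⟨x, trivial, y, trivial, z, trivial, hxy, hxz, hyz, rfl⟩

lemma swap_mul_swap_mem_finitaryAlternatingGroup {x y u v : α} (hxy : x ≠ y) (huv : u ≠ v) :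
    swap x y * swap u v ∈ finitaryAlternatingGroup α := by
  have adjacent : ∀ {a b c : α}, a ≠ b → b ≠ c →
      swap a b * swap b c ∈ finitaryAlternatingGroup α := by
    intro a b c hab hbc
    obtain rfl | hac := eq_or_ne a c
    · rw [swap_comm b a, swap_mul_self]
      exact Subgroup.one_mem _
    · exact threeCycle_mem_finitaryAlternatingGroup hab hac hbc
  obtain rfl | hyu := eq_or_ne y u
  · exact adjacent hxy huv
  · simpa [mul_assoc] using Subgroup.mul_mem _ (adjacent hxy hyu) (adjacent hyu huv)

lemma mem_or_swap_mul_mem_finitaryAlternatingGroup {σ : Perm α}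
    (hσ : σ ∈ Subgroup.closure {σ : Perm α | σ.IsSwap}) {x y : α} (hxy : x ≠ y) :
    σ ∈ finitaryAlternatingGroup α ∨ swap x y * σ ∈ finitaryAlternatingGroup α := by
  have swap_mul : ∀ (τ : Perm α) (u v x y : α), u ≠ v → x ≠ y →
      τ ∈ finitaryAlternatingGroup α ∨ swap u v * τ ∈ finitaryAlternatingGroup α →
      swap u v * τ ∈ finitaryAlternatingGroup α ∨
        swap x y * (swap u v * τ) ∈ finitaryAlternatingGroup α := by
    rintro τ u v x y huv hxy (h | h)
    · right
      rw [← mul_assoc]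
      exact Subgroup.mul_mem _ (swap_mul_swap_mem_finitaryAlternatingGroup hxy huv) h
    · exact Or.inl h
  induction hσ using Subgroup.closure_induction_left generalizing x y with
  | one => exact Or.inl (Subgroup.one_mem _)
  | mul_left s hs τ _ ih =>
    obtain ⟨u, v, huv, rfl⟩ := hs
    exact swap_mul τ u v x y huv hxy (ih huv)
  | inv_mul_cancel s hs τ _ ih =>
    obtain ⟨u, v, huv, rfl⟩ := hs
    rw [swap_inv]
    exact swap_mul τ u v x y huv hxy (ih huv)

lemma inv_mul_mem_finitaryAlternatingGroup {σ τ : Perm α}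
    (hσ : σ ∈ Subgroup.closure {σ : Perm α | σ.IsSwap})
    (hτ : τ ∈ Subgroup.closure {σ : Perm α | σ.IsSwap})
    (hσA : σ ∉ finitaryAlternatingGroup α) (hτA : τ ∉ finitaryAlternatingGroup α) :
    σ⁻¹ * τ ∈ finitaryAlternatingGroup α := by
  obtain ⟨x, hx⟩ : ∃ x, σ x ≠ x := by
    by_contra! hfix
    exact hσA ((Perm.ext hfix : σ = 1) ▸ Subgroup.one_mem _)
  have hσx := (mem_or_swap_mul_mem_finitaryAlternatingGroup hσ hx).resolve_left hσA
  have hτx := (mem_or_swap_mul_mem_finitaryAlternatingGroup hτ hx).resolve_left hτA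
  simpa [mul_assoc] using Subgroup.mul_mem _ (Subgroup.inv_mem _ hσx) hτx

/-- Take a maximal `s ⊇ {p | p.2 < L}` with all its three-cycles in `K`. If `(i, x)` is a point
outside `s` of least height, then shifting by `η` a three-cycle through `(i, x - m)` and two points
at the bottom of the ray `i` gives one through `(i, x)` and two points of `s`, so `s` can be
enlarged. -/
lemma finitaryAlternatingGroup_le_of_shift {ι : Type*} [DecidableEq ι]
    {K : Subgroup (Perm (ι × ℕ))} {L : ℕ} (hL : threeCyclesOn {p : ι × ℕ | p.2 < L} ⊆ K)
    (hshift : ∀ i, ∃ η ∈ K, ∃ m N, 0 < m ∧ N + m + 1 < L ∧ ∀ x ≥ N, η (i, x) = (i, x + m)) :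
    finitaryAlternatingGroup (ι × ℕ) ≤ K := by
  obtain ⟨s, hLs, hs⟩ :=
    (threeCyclesOn_isOfFiniteCharacter (K : Set (Perm (ι × ℕ)))).exists_maximal hL
  suffices hmem : ∀ x i, (i, x) ∈ s by
    rw [finitaryAlternatingGroup, Subgroup.closure_le]
    exact (threeCyclesOn_mono fun p _ ↦ hmem p.2 p.1).trans hs.prop
  intro x
  induction x using Nat.strong_induction_on with
  | _ x ih =>
    intro i
    by_contra hx
    have hLx : L ≤ x := not_lt.1 fun h ↦ hx (hLs h)
    obtain ⟨η, hη, m, N, hm, hNL, hηi⟩ := hshift i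
    have hK : threeCycle (i, N) (i, N + 1) (i, x - m) ∈ K :=
      hs.prop ⟨_, ih N (by omega) i, _, ih (N + 1) (by omega) i, _, ih (x - m) (by omega) i,
        by grind, by grind, by grind, rfl⟩
    have hconj := K.mul_mem (K.mul_mem hη hK) (K.inv_mem hη)
    rw [conj_threeCycle, hηi _ le_rfl, hηi _ (by omega), hηi _ (by omega),
      Nat.sub_add_cancel (by omega)] at hconj
    have hinsert : threeCyclesOn (insert (i, x) s) ⊆ K :=
      threeCyclesOn_insert_subset hs.prop (ih (N + m) (by omega) i) (ih (N + 1 + m) (by omega) i)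
        (by grind) hx hconj
    exact hx (hs.le_of_ge hinsert (Set.subset_insert _ _) (Set.mem_insert _ _))

end ThreeCycles

section FinitelyGenerated

variable {G : Type*} [Group G]

lemma subgroup_fg_of_comm {A : Type*} [CommGroup A] [Group.FG A] (H : Subgroup A) : H.FG := by
  have : Module.Finite ℤ (Additive A) := Module.Finite.iff_addGroup_fg.2 inferInstance
  rw [Subgroup.fg_iff_add_fg, ← AddSubgroup.toIntSubmodule_toAddSubgroup H.toAddSubgroup,
    ← Submodule.fg_iff_addSubgroup_fg]
  exact IsNoetherian.noetherian _

lemma exists_fg_le_sup_ker {A : Type*} [Group A] (f : G →* A) {H : Subgroup G}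
    (hH : (H.map f).FG) : ∃ K ≤ H, K.FG ∧ H ≤ K ⊔ H ⊓ f.ker := by
  classical
  obtain ⟨S, hS⟩ := hH
  obtain ⟨T, hTH, rfl⟩ : ∃ T : Finset G, ↑T ⊆ (H : Set G) ∧ T.image f = S :=
    Finset.subset_set_image_iff.1 fun s hs ↦ by
      simpa using hS.le (Subgroup.subset_closure hs)
  have hKH : Subgroup.closure (T : Set G) ≤ H := (Subgroup.closure_le H).2 hTH
  refine ⟨Subgroup.closure T, hKH, ⟨T, rfl⟩, fun h hh ↦ ?_⟩
  rw [Finset.coe_image, ← MonoidHom.map_closure] at hS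
  obtain ⟨k, hk, hkh⟩ := hS.ge (Subgroup.mem_map_of_mem f hh)
  have hker : k⁻¹ * h ∈ H ⊓ f.ker :=
    ⟨H.mul_mem (H.inv_mem (hKH hk)) hh, by simp [hkh]⟩
  simpa using Subgroup.mul_mem_sup hk hker

lemma exists_le_sup_zpowers {A B : Subgroup G}
    (h : ∀ a ∈ B, ∀ b ∈ B, a ∉ A → b ∉ A → a⁻¹ * b ∈ A) :
    ∃ o ∈ B, B ≤ A ⊔ Subgroup.zpowers o := by
  by_cases hBA : B ≤ A
  · exact ⟨1, B.one_mem, hBA.trans le_sup_left⟩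
  obtain ⟨o, hoB, hoA⟩ := SetLike.not_le_iff_exists.1 hBA
  refine ⟨o, hoB, fun b hb ↦ ?_⟩
  by_cases hbA : b ∈ A
  · exact Subgroup.mem_sup_left hbA
  · have ho : o ∈ A ⊔ Subgroup.zpowers o := Subgroup.mem_sup_right (Subgroup.mem_zpowers o)
    simpa using Subgroup.mul_mem _ ho (Subgroup.mem_sup_left (h o hoB b hb hoA hbA))

lemma fg_zpowers (g : G) : (Subgroup.zpowers g).FG :=
  ⟨{g}, by rw [Finset.coe_singleton, Subgroup.zpowers_eq_closure]⟩

lemma eventually_le_stabilizer_of_fg {α : Type*} [MulAction G α] {H : Subgroup G} (hH : H.FG)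
    {l : Filter α} (h : ∀ g ∈ H, ∀ᶠ x in l, g • x = x) :
    ∀ᶠ x in l, H ≤ MulAction.stabilizer G x := by
  obtain ⟨S, rfl⟩ := hH
  have hS : ∀ᶠ x in l, ∀ g ∈ S, g • x = x :=
    (Filter.eventually_all_finset S).2 fun g hg ↦ h g (Subgroup.subset_closure hg)
  exact hS.mono fun x hx ↦ (Subgroup.closure_le _).2 hx

end FinitelyGenerated

namespace Houghton

open Equiv Filter

variable {n : ℕ}

lemma finite_setOf_snd_lt {ι : Type*} [Finite ι] (N : ℕ) : {p : ι × ℕ | p.2 < N}.Finite :=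
  (Set.finite_univ.prod (Set.finite_lt_nat N)).subset fun _ hp ↦ ⟨trivial, hp⟩

lemma eventually_chiF {f : Fin n × ℕ → Fin n × ℕ} (hf : IsEvTrans f) (i : Fin n) :
    ∀ᶠ x : ℕ in atTop, (f (i, x)).1 = i ∧ ((f (i, x)).2 : ℤ) = x + chiF n i f := by
  rw [chiF, dif_pos (hf i), eventually_atTop]
  exact (hf i).choose_spec

lemma chiF_eq {f : Fin n × ℕ → Fin n × ℕ} (hf : IsEvTrans f) {i : Fin n} {m : ℤ}
    (h : ∀ᶠ x : ℕ in atTop, ((f (i, x)).2 : ℤ) = x + m) : chiF n i f = m := by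
  obtain ⟨x, hx, -, hx'⟩ := (h.and (eventually_chiF hf i)).exists
  linarith

lemma tendsto_snd_atTop {f : Fin n × ℕ → Fin n × ℕ} (hf : IsEvTrans f) (i : Fin n) :
    Tendsto (fun x ↦ (f (i, x)).2) atTop atTop := by
  rw [← tendsto_natCast_atTop_iff (R := ℤ)]
  exact (tendsto_atTop_add_const_right _ _ tendsto_natCast_atTop_atTop).congr'
    ((eventually_chiF hf i).mono fun x hx ↦ hx.2.symm)

lemma chiF_comp {f g : Fin n × ℕ → Fin n × ℕ} (hf : IsEvTrans f) (hg : IsEvTrans g) (i : Fin n) :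
    chiF n i (f ∘ g) = chiF n i f + chiF n i g := by
  refine chiF_eq (hf.comp hg) ?_
  filter_upwards [eventually_chiF hg i, (tendsto_snd_atTop hg i).eventually (eventually_chiF hf i)]
    with x hgx hfx
  have hg_eq : g (i, x) = (i, (g (i, x)).2) := Prod.ext hgx.1 rfl
  rw [Function.comp_apply, hg_eq, hfx.2, hgx.2]
  ring

/-- The homomorphism `(χ_1, …, χ_n) : H_n → ℤⁿ`, with `ℤⁿ` written multiplicatively. -/
noncomputable def chiHom (n : ℕ) : Houghton n →* Multiplicative (Fin n → ℤ) :=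
  MonoidHom.mk' (fun η ↦ Multiplicative.ofAdd fun i ↦ chiF n i (η : Perm (Fin n × ℕ)))
    fun a b ↦ congrArg Multiplicative.ofAdd (funext (chiF_comp a.2 b.2))

lemma toAdd_chiHom_apply (η : Houghton n) (i : Fin n) :
    (chiHom n η).toAdd i = chiF n i (η : Perm (Fin n × ℕ)) := rfl

lemma chiF_inv (η : Houghton n) (i : Fin n) :
    chiF n i (η⁻¹ : Houghton n).1 = -chiF n i η.1 := by
  rw [← toAdd_chiHom_apply, map_inv, toAdd_inv, Pi.neg_apply, toAdd_chiHom_apply]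

lemma eventually_smul_eq_self {η : Houghton n} {i : Fin n}
    (h : chiF n i (η : Perm (Fin n × ℕ)) = 0) : ∀ᶠ x : ℕ in atTop, η • (i, x) = (i, x) :=
  (eventually_chiF η.2 i).mono fun x hx ↦ Prod.ext hx.1 (by
    rw [h, add_zero] at hx
    exact_mod_cast hx.2)

lemma mem_closure_isSwap_of_mem_ker {η : Houghton n} (hη : η ∈ (chiHom n).ker) :
    (η : Perm (Fin n × ℕ)) ∈ Subgroup.closure {σ : Perm (Fin n × ℕ) | σ.IsSwap} := by
  have hfix (i : Fin n) : ∀ᶠ x : ℕ in atTop, η • (i, x) = (i, x) :=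
    eventually_smul_eq_self (congrFun (congrArg Multiplicative.toAdd hη) i)
  obtain ⟨N, hN⟩ := eventually_atTop.1 (eventually_all.2 hfix)
  rw [mem_closure_isSwap']
  exact (finite_setOf_snd_lt N).subset fun p hp ↦ not_le.1 fun h ↦ hp (hN p.2 h p.1)

lemma swap_mem (x y : Fin n × ℕ) : swap x y ∈ Houghton n := by
  refine fun i ↦ ⟨0, x.2 + y.2 + 1, fun k hk ↦ ?_⟩
  rw [swap_apply_of_ne_of_ne (by grind) (by grind)]
  simp

lemma finitaryAlternatingGroup_le_commutator :
    finitaryAlternatingGroup (Fin n × ℕ) ≤ ⁅Houghton n, Houghton n⁆ := by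
  rw [finitaryAlternatingGroup, Subgroup.closure_le]
  rintro _ ⟨x, -, y, -, z, -, hxy, hxz, hyz, rfl⟩
  rw [threeCycle_eq_commutator hxy hxz hyz]
  exact Subgroup.commutator_mem_commutator (swap_mem y z) (swap_mem x y)

lemma finitaryAlternatingGroup_le : finitaryAlternatingGroup (Fin n × ℕ) ≤ Houghton n :=
  finitaryAlternatingGroup_le_commutator.trans (Subgroup.commutator_le_self _)

lemma subgroupOf_finitaryAlternatingGroup_le_of_le_map {K : Subgroup (Houghton n)}
    (hK : finitaryAlternatingGroup (Fin n × ℕ) ≤ K.map (Houghton n).subtype) :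
    (finitaryAlternatingGroup (Fin n × ℕ)).subgroupOf (Houghton n) ≤ K :=
  fun _ hg ↦ (Subgroup.mem_map_iff_mem (Houghton n).subtype_injective).1 (hK hg)

lemma subgroupOf_finitaryAlternatingGroup_le_commutator :
    (finitaryAlternatingGroup (Fin n × ℕ)).subgroupOf (Houghton n) ≤ commutator (Houghton n) := by
  apply subgroupOf_finitaryAlternatingGroup_le_of_le_map
  rw [Subgroup.map_subtype_commutator]
  exact finitaryAlternatingGroup_le_commutator

lemma exists_chiF_ne_zero_of_fg {H : Subgroup (Houghton n)} (hfg : H.FG)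
    (hH : (finitaryAlternatingGroup (Fin n × ℕ)).subgroupOf (Houghton n) ≤ H) (i : Fin n) :
    ∃ η ∈ H, chiF n i (η : Perm (Fin n × ℕ)) ≠ 0 := by
  by_contra! hzero
  have hfix : ∀ᶠ p in map (Prod.mk i) atTop, H ≤ MulAction.stabilizer (Houghton n) p :=
    eventually_le_stabilizer_of_fg hfg fun η hη ↦ eventually_smul_eq_self (hzero η hη)
  obtain ⟨x, hx⟩ := (eventually_map.1 hfix).exists
  let σ := threeCycle (i, x) (i, x + 1) (i, x + 2)
  have hσA : σ ∈ finitaryAlternatingGroup (Fin n × ℕ) :=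
    threeCycle_mem_finitaryAlternatingGroup (by simp) (by simp) (by simp)
  have hσ_fix : σ (i, x) = (i, x) := hx (hH (x := ⟨σ, finitaryAlternatingGroup_le hσA⟩) hσA)
  have hσ_move : σ (i, x) = (i, x + 1) := threeCycle_apply_left (by simp) (by simp)
  simpa using hσ_move.symm.trans hσ_fix

lemma exists_shift_mem {H : Subgroup (Houghton n)} {i : Fin n}
    (h : ∃ η ∈ H, chiF n i (η : Perm (Fin n × ℕ)) ≠ 0) :
    ∃ η ∈ H, ∃ m N, 0 < m ∧ ∀ x ≥ N, (η : Perm (Fin n × ℕ)) (i, x) = (i, x + m) := by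
  obtain ⟨η, hηH, hη⟩ : ∃ η ∈ H, 0 < chiF n i (η : Perm (Fin n × ℕ)) := by
    obtain ⟨η, hηH, hη⟩ := h
    obtain hneg | hpos := hη.lt_or_gt
    · exact ⟨η⁻¹, H.inv_mem hηH, by rwa [chiF_inv, neg_pos]⟩
    · exact ⟨η, hηH, hpos⟩
  obtain ⟨m, hm⟩ := Int.eq_ofNat_of_zero_le hη.le
  obtain ⟨N, hN⟩ := eventually_atTop.1 (eventually_chiF η.2 i)
  refine ⟨η, hηH, m, N, by omega, fun x hx ↦ Prod.ext (hN x hx).1 ?_⟩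
  have := (hN x hx).2
  omega

lemma exists_fg_finitaryAlternatingGroup_le {H : Subgroup (Houghton n)}
    (hH : (finitaryAlternatingGroup (Fin n × ℕ)).subgroupOf (Houghton n) ≤ H)
    (hchi : ∀ i, ∃ η ∈ H, chiF n i (η : Perm (Fin n × ℕ)) ≠ 0) :
    ∃ K ≤ H, K.FG ∧ (finitaryAlternatingGroup (Fin n × ℕ)).subgroupOf (Houghton n) ≤ K := by
  choose η hηH m N hm hshift using fun i ↦ exists_shift_mem (hchi i)
  obtain ⟨L, hL⟩ : ∃ L, ∀ i, N i + m i + 1 < L := by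
    obtain ⟨B, hB⟩ := (Set.finite_range fun i ↦ N i + m i + 1).bddAbove
    exact ⟨B + 1, fun i ↦ Nat.lt_succ_of_le (hB ⟨i, rfl⟩)⟩
  let S : Set (Houghton n) := Set.range η ∪ Subtype.val ⁻¹' threeCyclesOn {p | p.2 < L}
  have hS : S.Finite := (Set.finite_range η).union
    ((finite_threeCyclesOn (finite_setOf_snd_lt L)).preimage Subtype.val_injective.injOn)
  refine ⟨Subgroup.closure S, (Subgroup.closure_le H).2 ?_, (Subgroup.fg_iff _).2 ⟨S, rfl, hS⟩, ?_⟩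
  · rintro σ (⟨i, rfl⟩ | hσ)
    · exact hηH i
    · exact hH (threeCyclesOn_subset_finitaryAlternatingGroup _ hσ)
  · refine subgroupOf_finitaryAlternatingGroup_le_of_le_map
      (finitaryAlternatingGroup_le_of_shift (L := L) ?_ fun i ↦ ?_)
    · have hσ_mem (σ) (hσ : σ ∈ threeCyclesOn {p : Fin n × ℕ | p.2 < L}) : σ ∈ Houghton n :=
        finitaryAlternatingGroup_le (threeCyclesOn_subset_finitaryAlternatingGroup _ hσ)
      exact fun σ hσ ↦ ⟨⟨σ, hσ_mem σ hσ⟩, Subgroup.subset_closure (Or.inr hσ), rfl⟩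
    · exact ⟨η i, ⟨η i, Subgroup.subset_closure (Or.inl ⟨i, rfl⟩), rfl⟩, m i, N i, hm i, hL i,
        hshift i⟩

lemma fg_of_forall_exists_chiF_ne_zero {H : Subgroup (Houghton n)}
    (hH : (finitaryAlternatingGroup (Fin n × ℕ)).subgroupOf (Houghton n) ≤ H)
    (hchi : ∀ i, ∃ η ∈ H, chiF n i (η : Perm (Fin n × ℕ)) ≠ 0) : H.FG := by
  obtain ⟨K, hKH, hK, hHK⟩ := exists_fg_le_sup_ker (chiHom n) (subgroup_fg_of_comm (H.map _))
  obtain ⟨C, hCH, hC, hAC⟩ := exists_fg_finitaryAlternatingGroup_le hH hchi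
  obtain ⟨o, ho, hoA⟩ := exists_le_sup_zpowers (B := H ⊓ (chiHom n).ker)
    (A := (finitaryAlternatingGroup (Fin n × ℕ)).subgroupOf (Houghton n))
    fun a ha b hb ↦ inv_mul_mem_finitaryAlternatingGroup
      (mem_closure_isSwap_of_mem_ker ha.2) (mem_closure_isSwap_of_mem_ker hb.2)
  have hH_eq : H = K ⊔ (C ⊔ Subgroup.zpowers o) := by
    refine le_antisymm ?_ (sup_le hKH (sup_le hCH (Subgroup.zpowers_le.2 ho.1)))
    calc H ≤ K ⊔ H ⊓ (chiHom n).ker := hHK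
      _ ≤ K ⊔ (C ⊔ Subgroup.zpowers o) := by gcongr; exact hoA.trans (by gcongr)
  rw [hH_eq]
  exact hK.sup (hC.sup (fg_zpowers o))

end Houghton

theorem subgroup_above_commutator_fg_iff_general {n : ℕ} (H : Subgroup (Houghton n))
    (hH : (finitaryAlternatingGroup (Fin n × ℕ)).subgroupOf (Houghton n) ≤ H) :
    Group.FG H ↔ ∀ i : Fin n, ∃ η ∈ H, chiF n i (η : Equiv.Perm (Fin n × ℕ)) ≠ 0 := by
  rw [Group.fg_iff_subgroup_fg]
  exact ⟨fun hfg ↦ Houghton.exists_chiF_ne_zero_of_fg hfg hH,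
    Houghton.fg_of_forall_exists_chiF_ne_zero hH⟩

/-- A subgroup `H` of `H_n` containing the commutator subgroup is finitely generated if
and only if `χ_i(H) ≠ {0}` for every `i`. -/
theorem subgroup_above_commutator_fg_iff (n : ℕ) (hn : 2 ≤ n)
    (H : Subgroup ↥(Houghton n)) (hH : commutator ↥(Houghton n) ≤ H) :
    Group.FG ↥H ↔
      ∀ i : Fin n, ∃ η : ↥(Houghton n), η ∈ H ∧
        chiF n i ⇑(η : Equiv.Perm (Fin n × ℕ)) ≠ 0 :=
  subgroup_above_commutator_fg_iff_general H
    (Houghton.subgroupOf_finitaryAlternatingGroup_le_commutator.trans hH)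
end
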